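/- (Policy improvement for unilateral proximal updates in Markov α-potential games.) Suppose the finite Markov game is a Markov α-potential game with α-potential function Φ. Let η > 0, let π be a profile, and let π' be a profile such that for every player i and every state s, π_i'(s) maximizes p ↦ ∑_{a_i} p(a_i)·Q_i(s,a_i;π) − (1/(2η))·‖p − π_i(s)‖₂² over the probability simplex Δ(A_i). Then for every probability distribution ν on S: ∑_{i∈I} ( Φ(ν,(π_i',π_{-i})) − Φ(ν,π) ) ≥ (1/(2η(1−δ)))·∑_{i∈I} ∑_{s∈S} d_ν^{(π_i',π_{-i})}(s)·‖π_i'(s) − π_i(s)‖₂² − |I|·α. -/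

import Mathlib

open Finset

section MarkovGameDefs

variable {S : Type*} {I : Type*} {A : I → Type*}

/-- A probability vector on a finite set. -/
def IsProbVec {α : Type*} [Fintype α] (p : α → ℝ) : Prop :=
  (∀ a, 0 ≤ p a) ∧ ∑ a, p a = 1

/-- A stationary policy profile: each player's policy gives a probability vector at each state. -/
def IsPolicy [Fintype I] [∀ i, Fintype (A i)] (π : ∀ i, S → A i → ℝ) : Prop :=
  ∀ i s, IsProbVec (π i s)

/-- A transition kernel. -/
def IsKernel [Fintype S] (P : S → (∀ i, A i) → S → ℝ) : Prop :=
  ∀ s a, IsProbVec (fun s' => P s a s')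

/-- Product distribution on joint actions induced by a profile. -/
noncomputable def jointDist [Fintype I] (π : ∀ i, S → A i → ℝ) (s : S) (a : ∀ i, A i) : ℝ :=
  ∏ i, π i s (a i)

/-- Induced transition matrix `P^π`. -/
noncomputable def transMat [Fintype S] [Fintype I] [DecidableEq I] [∀ i, Fintype (A i)]
    (P : S → (∀ i, A i) → S → ℝ) (π : ∀ i, S → A i → ℝ) (s s' : S) : ℝ :=
  ∑ a : ∀ j, A j, jointDist π s a * P s a s'

/-- Expected one-stage payoff `u(s,π)`. -/
noncomputable def expPay [Fintype I] [DecidableEq I] [∀ i, Fintype (A i)]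
    (u : S → (∀ i, A i) → ℝ) (π : ∀ i, S → A i → ℝ) (s : S) : ℝ :=
  ∑ a : ∀ j, A j, jointDist π s a * u s a

/-- `V` solves the Bellman equation for payoff `u`, kernel `P`, discount `δ`, profile `π`. -/
def IsValueFun [Fintype S] [Fintype I] [DecidableEq I] [∀ i, Fintype (A i)]
    (δ : ℝ) (P : S → (∀ i, A i) → S → ℝ) (u : S → (∀ i, A i) → ℝ)
    (π : ∀ i, S → A i → ℝ) (V : S → ℝ) : Prop :=
  ∀ s, V s = expPay u π s + δ * ∑ s', transMat P π s s' * V s'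

/-- Player `i`'s Q-function, given a value function `V` for player `i` under `π`. -/
noncomputable def Qfun [Fintype S] [Fintype I] [DecidableEq I] [∀ i, Fintype (A i)]
    [∀ i, DecidableEq (A i)]
    (δ : ℝ) (P : S → (∀ i, A i) → S → ℝ) (u : S → (∀ i, A i) → ℝ)
    (π : ∀ i, S → A i → ℝ) (V : S → ℝ) (i : I) (s : S) (ai : A i) : ℝ :=
  ∑ a : ∀ j, A j,
    if a i = ai then
      (∏ j ∈ Finset.univ.erase i, π j s (a j)) * (u s a + δ * ∑ s', P s a s' * V s')
    else 0

/-- Discounted state visitation distribution `d_μ^π`. -/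
noncomputable def dvisit [Fintype S] [DecidableEq S] [Fintype I] [DecidableEq I]
    [∀ i, Fintype (A i)]
    (δ : ℝ) (P : S → (∀ i, A i) → S → ℝ) (π : ∀ i, S → A i → ℝ) (μ : S → ℝ) (s : S) : ℝ :=
  (1 - δ) * ∑' k : ℕ, δ ^ k * ∑ s0, μ s0 * ((Matrix.of (transMat P π)) ^ k) s0 s

/-- Negative entropy `ν(p) = ∑ p log p` (with the convention `0 log 0 = 0`,
which holds automatically since `Real.log 0 = 0`). -/
noncomputable def negent {α : Type*} [Fintype α] (p : α → ℝ) : ℝ :=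
  ∑ a, p a * Real.log (p a)

/-- `Ṽ` solves the Bellman equation of the `τ`-smoothed game for player `i`. -/
def IsSmoothedValueFun [Fintype S] [Fintype I] [DecidableEq I] [∀ i, Fintype (A i)]
    (δ τ : ℝ) (P : S → (∀ i, A i) → S → ℝ) (u : S → (∀ i, A i) → ℝ)
    (π : ∀ i, S → A i → ℝ) (i : I) (Vt : S → ℝ) : Prop :=
  ∀ s, Vt s = expPay u π s - τ * negent (π i s) + δ * ∑ s', transMat P π s s' * Vt s'

/-- Smoothed Q-function `Q̃_i(s,a_i;π)`. -/
noncomputable def Qsmooth [Fintype S] [Fintype I] [DecidableEq I] [∀ i, Fintype (A i)]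
    [∀ i, DecidableEq (A i)]
    (δ τ : ℝ) (P : S → (∀ i, A i) → S → ℝ) (u : S → (∀ i, A i) → ℝ)
    (π : ∀ i, S → A i → ℝ) (Vt : S → ℝ) (i : I) (s : S) (ai : A i) : ℝ :=
  ∑ a : ∀ j, A j,
    if a i = ai then
      (∏ j ∈ Finset.univ.erase i, π j s (a j)) *
        (u s a - τ * negent (π i s) + δ * ∑ s', P s a s' * Vt s')
    else 0

/-- Euclidean (ℓ²) norm on `α → ℝ`. -/
noncomputable def l2norm {α : Type*} [Fintype α] (f : α → ℝ) : ℝ :=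
  Real.sqrt (∑ a, f a ^ 2)

/-- Standard inner product on `α → ℝ`. -/
noncomputable def dotp {α : Type*} [Fintype α] (f g : α → ℝ) : ℝ :=
  ∑ a, f a * g a

/-- `y` is the Euclidean orthogonal projection of `x` onto the probability simplex. -/
noncomputable def IsProjSimplex {α : Type*} [Fintype α] (x y : α → ℝ) : Prop :=
  IsProbVec y ∧ ∀ z, IsProbVec z → l2norm (fun a => y a - x a) ≤ l2norm (fun a => z a - x a)

/-- Softmax (smoothed best response) with temperature `τ`. -/
noncomputable def softmax {α : Type*} [Fintype α] (τ : ℝ) (q : α → ℝ) (a : α) : ℝ :=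
  Real.exp (q a / τ) / ∑ a', Real.exp (q a' / τ)

end MarkovGameDefs

/-!
The visitation distribution `d` of a chain `M` started from `ν` satisfies the flow equation
`d = (1 - δ) ν + δ d M`, so pairing `d` with a Bellman residual `W - δ M W` returns
`(1 - δ) ∑ ν W`. For a unilateral deviation `p` of player `i` from `π`, the Bellman residual of the
gain in value is the advantage `∑ (p - π_i) Q_i`, which gives the performance difference lemma. A
proximal step makes the advantage at each state at least its own penalty, because `π_i` itself is
a competitor with penalty zero. Passing from values to the potential costs `α` per player.
-/

section DiscountedOccupation

open scoped Matrix

variable {S : Type*} [Fintype S] [DecidableEq S] {M : Matrix S S ℝ} {δ : ℝ}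

/-- The discounted occupation vector `(1 - δ) ∑ₖ δᵏ ν Mᵏ` of a chain with transition matrix `M`
and initial weights `ν`, which need not form a probability vector; `dvisit` is the case of the
transition matrix of a profile. -/
noncomputable def discountedOccupation (δ : ℝ) (M : Matrix S S ℝ) (ν : S → ℝ) (s : S) : ℝ :=
  (1 - δ) * ∑' k : ℕ, δ ^ k * (ν ᵥ* M ^ k) s

theorem discountedOccupation_nonneg (hδ : 0 ≤ δ) (hδ1 : δ ≤ 1)
    (hM : M ∈ Matrix.rowStochastic ℝ S) {ν : S → ℝ} (hν : ∀ s, 0 ≤ ν s) (s : S) :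
    0 ≤ discountedOccupation δ M ν s :=
  mul_nonneg (sub_nonneg.2 hδ1) <| tsum_nonneg fun k ↦
    mul_nonneg (pow_nonneg hδ k) (Matrix.nonneg_vecMul_of_mem_rowStochastic (pow_mem hM k) hν s)

theorem abs_vecMul_le_sum_abs (hM : M ∈ Matrix.rowStochastic ℝ S) (ν : S → ℝ) (s : S) :
    |(ν ᵥ* M) s| ≤ ∑ t, |ν t| := by
  refine (abs_sum_le_sum_abs _ _).trans (sum_le_sum fun t _ ↦ ?_)
  rw [abs_mul, abs_of_nonneg (Matrix.nonneg_of_mem_rowStochastic hM)]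
  exact mul_le_of_le_one_right (abs_nonneg _) (Matrix.le_one_of_mem_rowStochastic hM)

theorem summable_pow_mul_vecMul_pow (hδ : |δ| < 1) (hM : M ∈ Matrix.rowStochastic ℝ S)
    (ν : S → ℝ) (s : S) : Summable fun k : ℕ ↦ δ ^ k * (ν ᵥ* M ^ k) s := by
  refine .of_norm_bounded ((summable_geometric_of_lt_one (abs_nonneg δ) hδ).mul_right (∑ t, |ν t|))
    fun k ↦ ?_
  rw [Real.norm_eq_abs, abs_mul, abs_pow]
  gcongr
  exact abs_vecMul_le_sum_abs (pow_mem hM k) ν s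

theorem discountedOccupation_eq_add_vecMul (hδ : |δ| < 1) (hM : M ∈ Matrix.rowStochastic ℝ S)
    (ν : S → ℝ) :
    discountedOccupation δ M ν = (1 - δ) • ν + δ • (discountedOccupation δ M ν ᵥ* M) := by
  ext s
  have hsum (t : S) := summable_pow_mul_vecMul_pow hδ hM ν t
  have hshift (k : ℕ) : δ ^ (k + 1) * (ν ᵥ* M ^ (k + 1)) s =
      δ * ∑ t, δ ^ k * (ν ᵥ* M ^ k) t * M t s := by
    rw [pow_succ M, ← Matrix.vecMul_vecMul, Matrix.vecMul, dotProduct, pow_succ', mul_assoc,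
      mul_sum]
    simp only [mul_assoc]
  have htail : ∑' k : ℕ, δ ^ (k + 1) * (ν ᵥ* M ^ (k + 1)) s =
      δ * ∑ t, (∑' k : ℕ, δ ^ k * (ν ᵥ* M ^ k) t) * M t s := by
    simp only [hshift, tsum_mul_left, ← tsum_mul_right]
    rw [Summable.tsum_finsetSum fun t _ ↦ (hsum t).mul_right _]
  have hvecMul : (discountedOccupation δ M ν ᵥ* M) s =
      (1 - δ) * ∑ t, (∑' k : ℕ, δ ^ k * (ν ᵥ* M ^ k) t) * M t s := by
    simp only [Matrix.vecMul, dotProduct, discountedOccupation, mul_sum, mul_assoc]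
  rw [Pi.add_apply, Pi.smul_apply, Pi.smul_apply, hvecMul, discountedOccupation,
    (hsum s).tsum_eq_zero_add, htail]
  simp only [pow_zero, Matrix.vecMul_one, smul_eq_mul]
  ring

theorem discountedOccupation_dotProduct_sub_mulVec (hδ : |δ| < 1)
    (hM : M ∈ Matrix.rowStochastic ℝ S) (ν W : S → ℝ) :
    discountedOccupation δ M ν ⬝ᵥ (W - δ • (M *ᵥ W)) = (1 - δ) * (ν ⬝ᵥ W) := by
  have hflow := congrArg (· ⬝ᵥ W) (discountedOccupation_eq_add_vecMul hδ hM ν)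
  simp only [add_dotProduct, smul_dotProduct, smul_eq_mul] at hflow
  rw [dotProduct_sub, dotProduct_smul, Matrix.dotProduct_mulVec, smul_eq_mul]
  linarith

end DiscountedOccupation

theorem IsProbVec.sum_mul_sub_le {S : Type*} [Fintype S] {ν : S → ℝ} (hν : IsProbVec ν)
    {f g : S → ℝ} {α : ℝ} (h : ∀ s, f s - α ≤ g s) :
    ∑ s, ν s * f s - α ≤ ∑ s, ν s * g s :=
  calc
    ∑ s, ν s * f s - α = ∑ s, ν s * (f s - α) := by
      simp only [mul_sub, sum_sub_distrib, ← sum_mul, hν.2, one_mul]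
    _ ≤ ∑ s, ν s * g s := sum_le_sum fun s _ ↦ mul_le_mul_of_nonneg_left (h s) (hν.1 s)

section MarkovGame

variable {S I : Type*} [Fintype I] [DecidableEq I] {A : I → Type*}
  {π : ∀ j, S → A j → ℝ} {i : I} {p : S → A i → ℝ}

theorem jointDist_update (π : ∀ j, S → A j → ℝ) (i : I) (p : S → A i → ℝ) (s : S)
    (a : ∀ j, A j) :
    jointDist (Function.update π i p) s a = p s (a i) * ∏ j ∈ univ.erase i, π j s (a j) := by
  rw [jointDist, ← mul_prod_erase _ _ (mem_univ i), Function.update_self]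
  congr 1
  refine prod_congr rfl fun j hj ↦ ?_
  rw [Function.update_of_ne (ne_of_mem_erase hj)]

variable [∀ i, Fintype (A i)]

theorem IsPolicy.update (hπ : IsPolicy π) (hp : ∀ s, IsProbVec (p s)) :
    IsPolicy (Function.update π i p) := by
  intro j s
  obtain rfl | hj := eq_or_ne j i
  · simpa only [Function.update_self] using hp s
  · simpa only [Function.update_of_ne hj] using hπ j s

theorem IsPolicy.isProbVec_jointDist (hπ : IsPolicy π) (s : S) : IsProbVec (jointDist π s) := by
  refine ⟨fun a ↦ prod_nonneg fun j _ ↦ (hπ j s).1 (a j), ?_⟩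
  simp only [jointDist]
  rw [← Fintype.prod_sum]
  exact prod_eq_one fun j _ ↦ (hπ j s).2

variable [Fintype S] {δ : ℝ} {P : S → (∀ j, A j) → S → ℝ} {u : S → (∀ j, A j) → ℝ}

theorem transMat_mem_rowStochastic [DecidableEq S] (hP : IsKernel P) (hπ : IsPolicy π) :
    Matrix.of (transMat P π) ∈ Matrix.rowStochastic ℝ S := by
  refine Matrix.mem_rowStochastic_iff_sum.2 ⟨fun s t ↦ ?_, fun s ↦ ?_⟩
  · exact sum_nonneg fun a _ ↦ mul_nonneg ((hπ.isProbVec_jointDist s).1 a) ((hP s a).1 t)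
  · simp only [Matrix.of_apply, transMat]
    rw [sum_comm]
    simp only [← mul_sum, (hP s _).2, mul_one, (hπ.isProbVec_jointDist s).2]

theorem dvisit_eq_discountedOccupation [DecidableEq S] (δ : ℝ)
    (P : S → (∀ j, A j) → S → ℝ) (π : ∀ j, S → A j → ℝ) (ν : S → ℝ) :
    dvisit δ P π ν = discountedOccupation δ (Matrix.of (transMat P π)) ν :=
  rfl

theorem sum_transMat_mul (P : S → (∀ j, A j) → S → ℝ) (π : ∀ j, S → A j → ℝ) (V : S → ℝ) (s : S) :
    ∑ t, transMat P π s t * V t = ∑ a, jointDist π s a * ∑ t, P s a t * V t := by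
  simp only [transMat, sum_mul, mul_sum, mul_assoc]
  exact sum_comm

variable [∀ i, DecidableEq (A i)]

/-- The advantage, at state `s` and against the profile `π` with values `V`, of player `i` mixing
according to `q` at `s` for one stage before returning to `π i`. -/
noncomputable def unilateralAdvantage (δ : ℝ) (P : S → (∀ j, A j) → S → ℝ)
    (u : S → (∀ j, A j) → ℝ) (π : ∀ j, S → A j → ℝ) (V : S → ℝ) (i : I) (s : S) (q : A i → ℝ) :
    ℝ :=
  ∑ b, q b * Qfun δ P u π V i s b - ∑ b, π i s b * Qfun δ P u π V i s b

theorem sum_mul_Qfun (δ : ℝ) (P : S → (∀ j, A j) → S → ℝ) (u : S → (∀ j, A j) → ℝ)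
    (π : ∀ j, S → A j → ℝ) (V : S → ℝ) (i : I) (p : S → A i → ℝ) (s : S) :
    ∑ b, p s b * Qfun δ P u π V i s b =
      expPay u (Function.update π i p) s +
        δ * ∑ t, transMat P (Function.update π i p) s t * V t := by
  calc
    ∑ b, p s b * Qfun δ P u π V i s b
      = ∑ a : ∀ j, A j, p s (a i) *
          ((∏ j ∈ univ.erase i, π j s (a j)) * (u s a + δ * ∑ t, P s a t * V t)) := by
        simp only [Qfun, mul_sum (s := (univ : Finset (∀ j, A j)))]
        rw [sum_comm]
        simp only [mul_ite, mul_zero, sum_ite_eq, mem_univ, if_true]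
    _ = ∑ a, jointDist (Function.update π i p) s a * (u s a + δ * ∑ t, P s a t * V t) := by
        simp only [jointDist_update, mul_assoc]
    _ = _ := by
        rw [sum_transMat_mul, expPay, mul_sum, ← sum_add_distrib]
        exact sum_congr rfl fun a _ ↦ by ring

theorem IsValueFun.eq_sum_mul_Qfun {V : S → ℝ} (hV : IsValueFun δ P u π V) (i : I) (s : S) :
    V s = ∑ b, π i s b * Qfun δ P u π V i s b := by
  rw [sum_mul_Qfun, Function.update_eq_self]
  exact hV s

theorem bellman_residual_eq_unilateralAdvantage {V V' : S → ℝ} (hV : IsValueFun δ P u π V)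
    (hV' : IsValueFun δ P u (Function.update π i p) V') (s : S) :
    V' s - V s - δ * ∑ t, transMat P (Function.update π i p) s t * (V' t - V t) =
      unilateralAdvantage δ P u π V i s (p s) := by
  rw [unilateralAdvantage, ← hV.eq_sum_mul_Qfun, sum_mul_Qfun, hV' s]
  simp only [mul_sub, sum_sub_distrib]
  ring

variable [DecidableEq S]

theorem performance_difference (hδ : |δ| < 1) (hP : IsKernel P)
    (hpol : IsPolicy (Function.update π i p)) {V V' : S → ℝ} (hV : IsValueFun δ P u π V)
    (hV' : IsValueFun δ P u (Function.update π i p) V') (ν : S → ℝ) :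
    ∑ s, dvisit δ P (Function.update π i p) ν s * unilateralAdvantage δ P u π V i s (p s) =
      (1 - δ) * (∑ s, ν s * V' s - ∑ s, ν s * V s) := by
  simp only [← bellman_residual_eq_unilateralAdvantage hV hV', ← sum_sub_distrib, ← mul_sub,
    dvisit_eq_discountedOccupation]
  exact discountedOccupation_dotProduct_sub_mulVec hδ (transMat_mem_rowStochastic hP hpol) ν
    (V' - V)

theorem sum_dvisit_mul_div_le_value_sub (hδ : 0 ≤ δ) (hδ1 : δ < 1) (hP : IsKernel P)
    (hpol : IsPolicy (Function.update π i p)) {V V' : S → ℝ} (hV : IsValueFun δ P u π V)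
    (hV' : IsValueFun δ P u (Function.update π i p) V') {ν : S → ℝ} (hν : ∀ s, 0 ≤ ν s)
    {g : S → ℝ} (hg : ∀ s, g s ≤ unilateralAdvantage δ P u π V i s (p s)) :
    (∑ s, dvisit δ P (Function.update π i p) ν s * g s) / (1 - δ) ≤
      ∑ s, ν s * V' s - ∑ s, ν s * V s := by
  have hδ_abs : |δ| < 1 := by rwa [abs_of_nonneg hδ]
  rw [div_le_iff₀' (sub_pos.2 hδ1), ← performance_difference hδ_abs hP hpol hV hV']
  refine sum_le_sum fun s _ ↦ mul_le_mul_of_nonneg_left (hg s) ?_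
  rw [dvisit_eq_discountedOccupation]
  exact discountedOccupation_nonneg hδ hδ1.le (transMat_mem_rowStochastic hP hpol) hν s

/-- `c * D i s` is the penalty of `π' i s` in the proximal objective; that of `π i s` is zero. -/
theorem proximal_policy_improvement_general (hδ : 0 ≤ δ) (hδ1 : δ < 1) (hP : IsKernel P)
    (u : I → S → (∀ j, A j) → ℝ) {α : ℝ} (V : I → (∀ j, S → A j → ℝ) → S → ℝ)
    (hV : ∀ i π, IsPolicy π → IsValueFun δ P (u i) π (V i π))
    (Φ : (∀ j, S → A j → ℝ) → S → ℝ)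
    (hpot : ∀ (s : S) (i : I) (π : ∀ j, S → A j → ℝ), IsPolicy π →
      ∀ (πi' : S → A i → ℝ), (∀ s', IsProbVec (πi' s')) →
        |(Φ (Function.update π i πi') s - Φ π s) -
          (V i (Function.update π i πi') s - V i π s)| ≤ α)
    {π' : ∀ j, S → A j → ℝ} (hπ : IsPolicy π) (hπ' : IsPolicy π') (c : ℝ) (D : I → S → ℝ)
    (hprox : ∀ i s, ∑ b, π i s b * Qfun δ P (u i) π (V i π) i s b ≤
      ∑ b, π' i s b * Qfun δ P (u i) π (V i π) i s b - c * D i s)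
    {ν : S → ℝ} (hν : IsProbVec ν) :
    ∑ i, ((∑ s, ν s * Φ (Function.update π i (π' i)) s) - ∑ s, ν s * Φ π s) ≥
      c / (1 - δ) * (∑ i, ∑ s, dvisit δ P (Function.update π i (π' i)) ν s * D i s) -
        Fintype.card I * α := by
  have hplayer (i : I) :
      c / (1 - δ) * (∑ s, dvisit δ P (Function.update π i (π' i)) ν s * D i s) - α ≤
        (∑ s, ν s * Φ (Function.update π i (π' i)) s) - ∑ s, ν s * Φ π s := by
    have hpol : IsPolicy (Function.update π i (π' i)) := hπ.update (hπ' i)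
    have hvalue := sum_dvisit_mul_div_le_value_sub hδ hδ1 hP hpol (hV i _ hπ) (hV i _ hpol) hν.1
      (g := fun s ↦ c * D i s) fun s ↦ le_sub_comm.1 (hprox i s)
    have hpotential := hν.sum_mul_sub_le (α := α)
      (f := fun s ↦ V i (Function.update π i (π' i)) s - V i π s)
      (g := fun s ↦ Φ (Function.update π i (π' i)) s - Φ π s)
      fun s ↦ by linarith [(abs_le.1 (hpot s i π hπ (π' i) (hπ' i))).1]
    simp only [mul_sub, sum_sub_distrib] at hpotential
    simp only [mul_left_comm _ c, ← mul_sum, mul_div_right_comm] at hvalue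
    linarith
  calc
    _ = ∑ i, (c / (1 - δ) *
          (∑ s, dvisit δ P (Function.update π i (π' i)) ν s * D i s) - α) := by
        simp only [sum_sub_distrib, mul_sum, sum_const, card_univ, nsmul_eq_mul]
    _ ≤ _ := sum_le_sum fun i _ ↦ hplayer i

end MarkovGame

/-- **Policy improvement for unilateral proximal updates in Markov `α`-potential games.** -/
theorem proximal_policy_improvement
    {S I : Type*} [Fintype S] [Nonempty S] [DecidableEq S]
    [Fintype I] [Nonempty I] [DecidableEq I]
    {A : I → Type*} [∀ i, Fintype (A i)] [∀ i, Nonempty (A i)] [∀ i, DecidableEq (A i)]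
    (δ : ℝ) (hδ : 0 < δ) (hδ1 : δ < 1)
    (P : S → (∀ i, A i) → S → ℝ) (hP : IsKernel P)
    (u : I → S → (∀ i, A i) → ℝ)
    (α : ℝ) (hα : 0 ≤ α)
    (V : I → (∀ j, S → A j → ℝ) → S → ℝ)
    (hV : ∀ i π, IsPolicy π → IsValueFun δ P (u i) π (V i π))
    (Φ : (∀ j, S → A j → ℝ) → S → ℝ)
    (hpot : ∀ (s : S) (i : I) (π : ∀ j, S → A j → ℝ), IsPolicy π →
      ∀ (πi' : S → A i → ℝ), (∀ s', IsProbVec (πi' s')) →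
        |(Φ (Function.update π i πi') s - Φ π s) -
          (V i (Function.update π i πi') s - V i π s)| ≤ α)
    (η : ℝ) (hη : 0 < η)
    (π π' : ∀ j, S → A j → ℝ) (hπ : IsPolicy π)
    -- each π'_i(s) maximizes the proximal objective over the simplex
    (hprox : ∀ (i : I) (s : S), IsProbVec (π' i s) ∧
      ∀ p : A i → ℝ, IsProbVec p →
        (∑ ai, p ai * Qfun δ P (u i) π (V i π) i s ai) -
            (1 / (2 * η)) * (l2norm (fun ai => p ai - π i s ai)) ^ 2 ≤
          (∑ ai, π' i s ai * Qfun δ P (u i) π (V i π) i s ai) -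
            (1 / (2 * η)) * (l2norm (fun ai => π' i s ai - π i s ai)) ^ 2) :
    ∀ (ν : S → ℝ), IsProbVec ν →
      ∑ i : I, ((∑ s, ν s * Φ (Function.update π i (π' i)) s) - (∑ s, ν s * Φ π s)) ≥
        (1 / (2 * η * (1 - δ))) *
            (∑ i : I, ∑ s : S, dvisit δ P (Function.update π i (π' i)) ν s *
              (l2norm (fun ai => π' i s ai - π i s ai)) ^ 2) -
          (Fintype.card I) * α := by
  intro ν hν
  rw [← div_div]
  exact proximal_policy_improvement_general hδ.le hδ1 hP u V hV Φ hpot hπ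
    (fun i s => (hprox i s).1) (1 / (2 * η)) _
    (fun i s => by simpa [l2norm] using (hprox i s).2 _ (hπ i s)) hν
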